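/- arXiv:2402.18486 — 2 statements merged into one kernel-verified Lean document; each statement's English description precedes it below -/
import Mathlib

section
/- Let B be a supersoluble brace and let I be an ideal of B. (1) If I ⊆ Z(B,+) and I has prime order, then I ⊆ Soc(B). (2) If I is an abelian brace (both operations of I coincide and are commutative) and (I,+) is infinite cyclic, then I ⊆ Soc(B). -/
/-- A (skew left) brace: a set with an additive group structure (not necessarily abelian)
and a multiplicative group structure sharing the same identity, satisfying the skew
distributive law `a * (b + c) = a * b + -a + a * c`. -/
class SkewBrace (B : Type*) extends AddGroup B, Group B where
  one_eq_zero : (1 : B) = (0 : B)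
  skew_distrib : ∀ a b c : B, a * (b + c) = a * b + -a + a * c

/-- A group is supersoluble if it has a finite chain of normal subgroups with all
factors cyclic. -/
def Group.IsSupersoluble (G : Type*) [Group G] : Prop :=
  ∃ (n : ℕ) (H : ℕ → Subgroup G),
    H 0 = ⊥ ∧ H n = ⊤ ∧ (∀ i, (H i).Normal) ∧ (∀ i, i < n → H i ≤ H (i + 1)) ∧
    ∀ i, i < n → ∃ x ∈ H (i + 1), ∀ y ∈ H (i + 1), ∃ k : ℤ, (x ^ k)⁻¹ * y ∈ H i

namespace SkewBrace

variable {B : Type*} [SkewBrace B]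

/-- `lam a b = -a + a * b`, i.e. `λ_a(b)`. -/
def lam (a b : B) : B := -a + a * b

/-- the star operation `a ∗ b = λ_a(b) - b`. -/
def starOp (a b : B) : B := lam a b + -b

/-- the additive commutator `[a,b]_+`. -/
def addCommutator (a b : B) : B := -a + -b + a + b

/-- A subbrace of `B`: a subset that is a subgroup of both `(B,+)` and `(B,·)`. -/
structure Subbrace (B : Type*) [SkewBrace B] where
  carrier : Set B
  zero_mem : (0 : B) ∈ carrier
  add_mem : ∀ {a b : B}, a ∈ carrier → b ∈ carrier → a + b ∈ carrier
  neg_mem : ∀ {a : B}, a ∈ carrier → -a ∈ carrier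
  mul_mem : ∀ {a b : B}, a ∈ carrier → b ∈ carrier → a * b ∈ carrier
  inv_mem : ∀ {a : B}, a ∈ carrier → a⁻¹ ∈ carrier

/-- An ideal of `B`: a subbrace that is normal in `(B,+)` and in `(B,·)` and is
invariant under all the maps `λ_b`. -/
structure BraceIdeal (B : Type*) [SkewBrace B] extends Subbrace B where
  addConj_mem : ∀ (b : B) {a : B}, a ∈ carrier → b + a + -b ∈ carrier
  mulConj_mem : ∀ (b : B) {a : B}, a ∈ carrier → b * a * b⁻¹ ∈ carrier
  lam_mem : ∀ (b : B) {a : B}, a ∈ carrier → lam b a ∈ carrier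

/-- The additive subgroup underlying a subbrace. -/
def Subbrace.addSubgroup (S : Subbrace B) : AddSubgroup B where
  carrier := S.carrier
  zero_mem' := S.zero_mem
  add_mem' := S.add_mem
  neg_mem' := S.neg_mem

/-- The multiplicative subgroup underlying a subbrace. -/
def Subbrace.subgroup (S : Subbrace B) : Subgroup B where
  carrier := S.carrier
  one_mem' := by rw [one_eq_zero]; exact S.zero_mem
  mul_mem' := S.mul_mem
  inv_mem' := S.inv_mem

/-- Given ideals `J ≤ I` of `B`, `MemSocQuotRel I J x` says that the coset of `x`
lies in `Soc(I/J) = Ker(λ) ∩ Z(I/J, +)` (for `I = B` take `I = Set.univ`). -/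
def MemSocQuotRel (I J : Set B) (x : B) : Prop :=
  x ∈ I ∧ (∀ y ∈ I, -y + lam x y ∈ J) ∧ ∀ y ∈ I, -(y + x) + (x + y) ∈ J

/-- Given ideals `J ≤ I` of `B`, `MemZetaQuotRel I J x` says that the coset of `x`
lies in `ζ(I/J) = Soc(I/J) ∩ Z(I/J, ·)`. -/
def MemZetaQuotRel (I J : Set B) (x : B) : Prop :=
  MemSocQuotRel I J x ∧ ∀ y ∈ I, (y * x)⁻¹ * (x * y) ∈ J

/-- The coset of `x` lies in `Soc(B/J)`. -/
def MemSocQuot (J : Set B) (x : B) : Prop := MemSocQuotRel Set.univ J x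

/-- The coset of `x` lies in `ζ(B/J)`. -/
def MemZetaQuot (J : Set B) (x : B) : Prop := MemZetaQuotRel Set.univ J x

/-- For ideals `I ≤ J`, the additive group of the quotient `J/I` is infinite cyclic. -/
def QuotAddInfCyclic (I J : Set B) : Prop :=
  ∃ x ∈ J, (∀ y ∈ J, ∃ n : ℤ, -(n • x) + y ∈ I) ∧ ∀ n : ℤ, n • x ∈ I → n = 0

/-- For ideals `I ≤ J`, the quotient `J/I` has prime order `p`. -/
def QuotPrimeOrder (I J : Set B) (p : ℕ) : Prop :=
  p.Prime ∧ ∃ x ∈ J, x ∉ I ∧ p • x ∈ I ∧ ∀ y ∈ J, ∃ n : ℤ, -(n • x) + y ∈ I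

/-- A brace is supersoluble if it has a finite chain of ideals each factor of which
either is additively infinite cyclic and contained in the socle of the corresponding
quotient, or has prime order. -/
def IsSupersoluble (B : Type*) [SkewBrace B] : Prop :=
  ∃ (n : ℕ) (I : ℕ → BraceIdeal B),
    (I 0).carrier = {0} ∧ (I n).carrier = Set.univ ∧
    (∀ i, i < n → (I i).carrier ⊆ (I (i + 1)).carrier) ∧
    ∀ i, i < n →
      (QuotAddInfCyclic (I i).carrier (I (i + 1)).carrier ∧
        ∀ x ∈ (I (i + 1)).carrier, MemSocQuot (I i).carrier x) ∨
      ∃ p : ℕ, QuotPrimeOrder (I i).carrier (I (i + 1)).carrier p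

/-- The upper socle series of the brace (carrier of the ideal) `I`. -/
def socChainRel (I : Set B) : ℕ → Set B
  | 0 => {0}
  | n + 1 => {x | MemSocQuotRel I (socChainRel I n) x}

/-- The upper central series of the brace (carrier of the ideal) `I`. -/
def zetaChainRel (I : Set B) : ℕ → Set B
  | 0 => {0}
  | n + 1 => {x | MemZetaQuotRel I (zetaChainRel I n) x}

/-- The upper socle series `Soc_n(B)` of `B`. -/
def socChain (B : Type*) [SkewBrace B] : ℕ → Set B := socChainRel Set.univ

/-- The upper central series `ζ_n(B)` of `B`. -/
def zetaChain (B : Type*) [SkewBrace B] : ℕ → Set B := zetaChainRel Set.univ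

/-- A brace is centrally nilpotent if its upper central series reaches `B`. -/
def IsCentrallyNilpotent (B : Type*) [SkewBrace B] : Prop :=
  ∃ m : ℕ, zetaChain B m = Set.univ

end SkewBrace

namespace SkewBrace

/-!
For `a` in an ideal `I`, both `-b + λ_a(b)` and the additive commutator of `a` and `b` lie in `I`,
and `a` lies in the socle exactly when all of them vanish.

If `I` is additively central of prime order, then `b ↦ -b + λ_a(b)` is a homomorphism `B → I`, so
it is zero or onto. It cannot be onto unless `a = 0`, since `-b + λ_a(b) = -a` says `a * b = b`.

If `I` is an abelian brace, both elements are instead additive in `a`, so for torsion-free `I` the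
socle contains `a` as soon as it contains a nonzero multiple of `a`. Finally, consider the first
term of a supersoluble series meeting a torsion-free `I` nontrivially: its factor cannot have prime
order, so it lies in the socle of the corresponding quotient, and its intersection with `I` lies in
the socle of `B`.
-/

section

variable {B : Type*} [SkewBrace B]

theorem add_lam (a b : B) : a + lam a b = a * b :=
  add_neg_cancel_left a (a * b)

theorem lam_zero_left (b : B) : lam 0 b = b := by
  rw [← zero_add (lam 0 b), add_lam, ← one_eq_zero, one_mul]

theorem lam_add (a b c : B) : lam a (b + c) = lam a b + lam a c := by
  simp only [lam, skew_distrib, add_assoc]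

theorem lam_mul (a b c : B) : lam (a * b) c = lam a (lam b c) := by
  refine add_left_cancel (a := a * b) ?_
  calc a * b + lam (a * b) c
    _ = a * (b * c) := by rw [add_lam, mul_assoc]
    _ = a + lam a (b + lam b c) := by rw [add_lam, add_lam]
    _ = a * b + lam a (lam b c) := by rw [lam_add, ← add_assoc, add_lam]

/-- The element `-b + λ_a(b)`, by which `λ_a` moves `b`. Together with the additive commutators
`[a,b]_+`, these elements are the obstructions to `a` lying in the socle. It differs from
`starOp a b = λ_a(b) - b` by an additive conjugation; this side matches `MemSocQuotRel`. -/
def displacement (a b : B) : B := -b + lam a b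

theorem displacement_zero_left (b : B) : displacement 0 b = 0 := by
  rw [displacement, lam_zero_left, neg_add_cancel]

theorem displacement_add {a b c : B} (h : AddCommute (displacement a b) c) :
    displacement a (b + c) = displacement a b + displacement a c := by
  calc displacement a (b + c)
    _ = -c + displacement a b + lam a c := by
      simp only [displacement, lam_add, neg_add_rev, add_assoc]
    _ = displacement a b + displacement a c := by
      rw [← h.neg_right.eq, add_assoc, ← displacement]

theorem displacement_mul (a b c : B) :
    displacement (a * b) c = displacement a c + lam a (displacement b c) := by
  calc displacement (a * b) c
    _ = -c + lam a (c + displacement b c) := by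
      rw [displacement, lam_mul, displacement, add_neg_cancel_left]
    _ = displacement a c + lam a (displacement b c) := by
      rw [lam_add, ← add_assoc, ← displacement]

theorem eq_zero_of_displacement_eq_neg {a b : B} (hab : AddCommute a b)
    (h : displacement a b = -a) : a = 0 := by
  have hmul : a * b = b := by
    calc a * b
      _ = a + b + displacement a b := by rw [displacement, add_assoc, add_neg_cancel_left, add_lam]
      _ = b := by rw [h, hab.eq, add_neg_cancel_right]
  rw [mul_eq_right.mp hmul, one_eq_zero]

theorem addCommutator_eq_zero_iff {a b : B} : addCommutator a b = 0 ↔ AddCommute a b := by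
  rw [addCommutator, add_assoc, ← neg_add_rev, neg_add_eq_zero, eq_comm, AddCommute,
    AddSemiconjBy]

theorem addCommutator_add_left (a b c : B) :
    addCommutator (a + b) c = -b + addCommutator a c + b + addCommutator b c := by
  simp only [addCommutator, neg_add_rev, add_assoc, add_neg_cancel_left]

theorem memSocQuot_iff {J : Set B} {a : B} :
    MemSocQuot J a ↔ ∀ b, displacement a b ∈ J ∧ addCommutator a b ∈ J := by
  simp only [MemSocQuot, MemSocQuotRel, Set.mem_univ, true_and, forall_const, forall_and,
    displacement, addCommutator, neg_add_rev, add_assoc]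

theorem QuotPrimeOrder.nsmul_mem {A : AddSubgroup B} [A.Normal] {K : Set B} {p : ℕ}
    (h : QuotPrimeOrder (A : Set B) K p) {b : B} (hb : b ∈ K) : p • b ∈ A := by
  obtain ⟨-, z, -, -, hpz, hgen⟩ := h
  obtain ⟨m, hm⟩ := hgen b hb
  have hbz : (b : B ⧸ A) = m • (z : B ⧸ A) := (QuotientAddGroup.eq.mpr hm).symm
  have hz : p • (z : B ⧸ A) = 0 := (QuotientAddGroup.eq_zero_iff (p • z)).mpr hpz
  rw [← QuotientAddGroup.eq_zero_iff, QuotientAddGroup.mk_nsmul, hbz, ← natCast_zsmul, zsmul_comm,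
    natCast_zsmul, hz, zsmul_zero]

namespace BraceIdeal

variable {I : BraceIdeal B}

instance normal_addSubgroup (I : BraceIdeal B) : I.addSubgroup.Normal :=
  ⟨fun _ ha b => I.addConj_mem b ha⟩

theorem addCommutator_mem {a : B} (ha : a ∈ I.carrier) (b : B) :
    addCommutator a b ∈ I.carrier := by
  have hconj : -b + a + b ∈ I.carrier := by simpa only [neg_neg] using I.addConj_mem (-b) ha
  simpa only [addCommutator, add_assoc] using I.add_mem (I.neg_mem ha) hconj

theorem displacement_mem {a : B} (ha : a ∈ I.carrier) (b : B) :
    displacement a b ∈ I.carrier := by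
  have hconj : b⁻¹ * a * b ∈ I.carrier := by simpa only [inv_inv] using I.mulConj_mem b⁻¹ ha
  have heq : displacement a b = -b + -a + b + lam b (b⁻¹ * a * b) := by
    rw [add_assoc _ b, add_lam, mul_assoc, mul_inv_cancel_left, displacement, lam, add_assoc]
  rw [heq]
  refine I.add_mem ?_ (I.lam_mem b hconj)
  simpa only [neg_neg] using I.addConj_mem (-b) (I.neg_mem ha)

/-- The homomorphism `b ↦ -b + λ_a(b)` from `(B,+)` to an additively central ideal `I`,
for `a` in `I`. -/
def displacementHom (hI : I.addSubgroup ≤ AddSubgroup.center B) (a : I.addSubgroup) :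
    B →+ I.addSubgroup :=
  AddMonoidHom.mk' (fun b => ⟨displacement a b, displacement_mem a.2 b⟩) fun b c =>
    Subtype.ext <| displacement_add
      (AddSubgroup.mem_center_iff.mp (hI (displacement_mem a.2 b)) c).symm

theorem memSocQuot_zero_of_le_center_of_prime_card (hI : I.addSubgroup ≤ AddSubgroup.center B)
    (hp : (Nat.card I.addSubgroup).Prime) {a : B} (ha : a ∈ I.carrier) :
    MemSocQuot {0} a := by
  have hcomm (b : B) : AddCommute a b := (AddSubgroup.mem_center_iff.mp (hI ha) b).symm
  refine memSocQuot_iff.mpr fun b => ⟨?_, addCommutator_eq_zero_iff.mpr (hcomm b)⟩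
  have : Fact (Nat.card I.addSubgroup).Prime := ⟨hp⟩
  rcases (displacementHom hI ⟨a, ha⟩).range.eq_bot_or_eq_top_of_prime_card with hbot | htop
  · exact congrArg Subtype.val (DFunLike.congr_fun (AddMonoidHom.range_eq_bot_iff.mp hbot) b)
  · obtain ⟨c, hc⟩ := AddMonoidHom.range_eq_top.mp htop ⟨-a, I.neg_mem ha⟩
    have ha0 : a = 0 := eq_zero_of_displacement_eq_neg (hcomm c) (congrArg Subtype.val hc)
    rw [ha0]
    exact displacement_zero_left b

/-- An ideal is an abelian brace if its two operations coincide and are commutative. -/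
def IsAbelian (I : BraceIdeal B) : Prop :=
  ∀ a ∈ I.carrier, ∀ b ∈ I.carrier, a * b = a + b ∧ a + b = b + a

namespace IsAbelian

theorem lam_eq_self (hI : I.IsAbelian) {a b : B} (ha : a ∈ I.carrier) (hb : b ∈ I.carrier) :
    lam a b = b := by
  rw [lam, (hI a ha b hb).1, neg_add_cancel_left]

theorem displacement_add_left (hI : I.IsAbelian) {a c : B} (ha : a ∈ I.carrier)
    (hc : c ∈ I.carrier) (b : B) :
    displacement (a + c) b = displacement a b + displacement c b := by
  rw [← (hI a ha c hc).1, displacement_mul, hI.lam_eq_self ha (displacement_mem hc b)]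

theorem addCommutator_add_left (hI : I.IsAbelian) {a c : B} (ha : a ∈ I.carrier)
    (hc : c ∈ I.carrier) (b : B) :
    addCommutator (a + c) b = addCommutator a b + addCommutator c b := by
  rw [SkewBrace.addCommutator_add_left, (hI _ (I.neg_mem hc) _ (addCommutator_mem ha b)).2,
    neg_add_cancel_right]

/-- The endomorphism `a ↦ -b + λ_a(b)` of the additive group of an ideal that is an abelian
brace. -/
def displacementHom (hI : I.IsAbelian) (b : B) : I.addSubgroup →+ I.addSubgroup :=
  AddMonoidHom.mk' (fun a => ⟨displacement a b, displacement_mem a.2 b⟩) fun a c =>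
    Subtype.ext (hI.displacement_add_left a.2 c.2 b)

/-- The endomorphism `a ↦ [a,b]_+` of the additive group of an ideal that is an abelian brace. -/
def addCommutatorHom (hI : I.IsAbelian) (b : B) : I.addSubgroup →+ I.addSubgroup :=
  AddMonoidHom.mk' (fun a => ⟨addCommutator a b, addCommutator_mem a.2 b⟩) fun a c =>
    Subtype.ext (hI.addCommutator_add_left a.2 c.2 b)

theorem memSocQuot_zero_iff (hI : I.IsAbelian) {a : I.addSubgroup} :
    MemSocQuot {0} (a : B) ↔ ∀ b, hI.displacementHom b a = 0 ∧ hI.addCommutatorHom b a = 0 := by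
  simp only [memSocQuot_iff, Set.mem_singleton_iff, Subtype.ext_iff]
  rfl

theorem memSocQuot_zero_zsmul (hI : I.IsAbelian) {a : I.addSubgroup}
    (ha : MemSocQuot {0} (a : B)) (n : ℤ) : MemSocQuot {0} ((n • a : I.addSubgroup) : B) := by
  rw [hI.memSocQuot_zero_iff] at ha ⊢
  exact fun b => by simp only [map_zsmul, ha b, zsmul_zero, and_self]

theorem memSocQuot_zero_of_zsmul (hI : I.IsAbelian) [IsAddTorsionFree I.addSubgroup]
    {a : I.addSubgroup} {n : ℤ} (hn : n ≠ 0) (ha : MemSocQuot {0} ((n • a : I.addSubgroup) : B)) :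
    MemSocQuot {0} (a : B) := by
  rw [hI.memSocQuot_zero_iff] at ha ⊢
  simpa only [map_zsmul, IsAddTorsionFree.zsmul_eq_zero_iff_right hn] using ha

end IsAbelian

theorem memSocQuot_zero_of_inter_subset {J : Set B} (hIJ : I.carrier ∩ J ⊆ {0}) {a : B}
    (ha : a ∈ I.carrier) (haJ : MemSocQuot J a) : MemSocQuot {0} a :=
  memSocQuot_iff.mpr fun b =>
    ⟨hIJ ⟨displacement_mem ha b, (memSocQuot_iff.mp haJ b).1⟩,
      hIJ ⟨addCommutator_mem ha b, (memSocQuot_iff.mp haJ b).2⟩⟩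

theorem exists_ne_zero_memSocQuot_zero (hB : IsSupersoluble B) (I : BraceIdeal B)
    [Nontrivial I.addSubgroup] [IsAddTorsionFree I.addSubgroup] :
    ∃ a : I.addSubgroup, a ≠ 0 ∧ MemSocQuot {0} (a : B) := by
  classical
  obtain ⟨n, J, hJ0, hJn, -, hfactor⟩ := hB
  have hn : ∃ a : I.addSubgroup, a ≠ 0 ∧ (a : B) ∈ (J n).carrier :=
    (exists_ne 0).imp fun a ha => ⟨ha, hJn ▸ Set.mem_univ (a : B)⟩
  have hmeet : ∃ k, ∃ a : I.addSubgroup, a ≠ 0 ∧ (a : B) ∈ (J k).carrier := ⟨n, hn⟩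
  obtain ⟨a, ha0, haJ⟩ := Nat.find_spec hmeet
  have hle : Nat.find hmeet ≤ n := Nat.find_min' hmeet hn
  cases hk : Nat.find hmeet with
  | zero =>
    rw [hk, hJ0] at haJ
    exact absurd (Subtype.ext (Set.mem_singleton_iff.mp haJ)) ha0
  | succ k =>
    rw [hk] at haJ
    have hdisj : I.carrier ∩ (J k).carrier ⊆ {0} := fun b ⟨hbI, hbJ⟩ => by
      by_contra hb0
      exact Nat.find_min hmeet (hk ▸ k.lt_succ_self)
        ⟨⟨b, hbI⟩, fun h => hb0 (congrArg Subtype.val h), hbJ⟩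
    rcases hfactor k (by omega) with ⟨-, hsoc⟩ | ⟨p, hprime⟩
    · exact ⟨a, ha0, memSocQuot_zero_of_inter_subset hdisj a.2 (hsoc a haJ)⟩
    · have hpa : p • a = 0 :=
        Subtype.ext (hdisj ⟨(p • a).2, hprime.nsmul_mem (A := (J k).addSubgroup) haJ⟩)
      exact absurd ((nsmul_eq_zero_iff_right hprime.1.ne_zero).mp hpa) ha0

theorem memSocQuot_zero_of_isAbelian (hB : IsSupersoluble B) (hI : I.IsAbelian)
    [Infinite I.addSubgroup] [IsAddCyclic I.addSubgroup] (a : I.addSubgroup) :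
    MemSocQuot {0} (a : B) := by
  have : IsAddTorsionFree I.addSubgroup :=
    Function.Injective.isAddTorsionFree (intCyclicAddEquiv (G := I.addSubgroup)).symm.toAddMonoidHom
      intCyclicAddEquiv.symm.injective
  obtain ⟨g, hg⟩ := IsAddCyclic.exists_generator (α := I.addSubgroup)
  obtain ⟨c, hc0, hc⟩ := exists_ne_zero_memSocQuot_zero hB I
  obtain ⟨N, rfl⟩ := hg c
  obtain ⟨m, rfl⟩ := hg a
  have hN : N ≠ 0 := by
    rintro rfl
    exact hc0 (zero_zsmul g)
  exact hI.memSocQuot_zero_zsmul (hI.memSocQuot_zero_of_zsmul hN hc) m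

end BraceIdeal

end

/-- Let `B` be a supersoluble brace and `I` an ideal of `B`.
(1) If `I ⊆ Z(B,+)` and `I` has prime order, then `I ⊆ Soc(B)`.
(2) If `I` is an abelian brace and `(I,+)` is infinite cyclic, then `I ⊆ Soc(B)`.
(Here `x ∈ Soc(B)` is expressed as `MemSocQuot {0} x`.) -/
theorem ideal_le_soc (B : Type*) [SkewBrace B] (hB : IsSupersoluble B)
    (I : BraceIdeal B) :
    ((∀ x ∈ I.carrier, ∀ b : B, x + b = b + x) →
      (∃ p : ℕ, p.Prime ∧ Nat.card I.carrier = p) →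
      ∀ x ∈ I.carrier, MemSocQuot ({0} : Set B) x) ∧
    ((∀ x ∈ I.carrier, ∀ y ∈ I.carrier, x * y = x + y ∧ x + y = y + x) →
      (∃ x ∈ I.carrier, (∀ y ∈ I.carrier, ∃ n : ℤ, y = n • x) ∧
        ∀ n : ℤ, n • x = 0 → n = 0) →
      ∀ x ∈ I.carrier, MemSocQuot ({0} : Set B) x) := by
  refine ⟨fun hcenter ⟨p, hp, hcard⟩ x hx => ?_, fun hab ⟨g, hg, hgen, hfree⟩ x hx => ?_⟩
  · have hI : I.addSubgroup ≤ AddSubgroup.center B := fun a ha =>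
      AddSubgroup.mem_center_iff.mpr fun b => (hcenter a ha b).symm
    exact BraceIdeal.memSocQuot_zero_of_le_center_of_prime_card hI (hcard ▸ hp) hx
  · let g' : I.addSubgroup := ⟨g, hg⟩
    have : IsAddCyclic I.addSubgroup :=
      ⟨g', fun a => (hgen a a.2).imp fun _ hn => Subtype.ext hn.symm⟩
    have : Infinite I.addSubgroup :=
      Infinite.of_injective (zmultiplesHom I.addSubgroup g') <|
        (injective_iff_map_eq_zero _).mpr fun n hn => hfree n (congrArg Subtype.val hn)
    exact BraceIdeal.memSocQuot_zero_of_isAbelian hB hab ⟨x, hx⟩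

end SkewBrace
end

section
/- A brace B is weakly supersoluble if and only if B is supersoluble. -/
namespace SkewBrace

/-- A brace is weakly supersoluble if it has a finite chain of ideals each factor of
which either is an additively central infinite cyclic subgroup of the corresponding
quotient, or has prime order. -/
def IsWeaklySupersoluble (B : Type*) [SkewBrace B] : Prop :=
  ∃ (n : ℕ) (I : ℕ → BraceIdeal B),
    (I 0).carrier = {0} ∧ (I n).carrier = Set.univ ∧
    (∀ i, i < n → (I i).carrier ⊆ (I (i + 1)).carrier) ∧
    ∀ i, i < n →
      (QuotAddInfCyclic (I i).carrier (I (i + 1)).carrier ∧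
        ∀ x ∈ (I (i + 1)).carrier, ∀ b : B, -(b + x) + (x + b) ∈ (I i).carrier) ∨
      ∃ p : ℕ, QuotPrimeOrder (I i).carrier (I (i + 1)).carrier p

/-!
Every automorphism of an infinite cyclic group is `1` or `-1`. Let `C` be an ideal of `B` which is
an infinite cyclic subgroup of the centre of `(B,+)`. The kernel of `λ` on the brace `C` contains
`2C`, is normal in `(B,·)`, and on it the two operations agree; so conjugation by `b` and `λ_b` both
act on it as `1` or `-1`. Writing `λ_x(b) - b` as a combination of `x` and a conjugate of `x` gives
`λ_x(b) ∈ {b, b - 2x}` for `x` in this kernel, and additivity of `λ_x` forces `λ_x(b) = b`.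
Hence `2C ⊆ Soc(B)`, and a weakly supersoluble factor `C` is refined by `2C`, infinite cyclic in the
socle, and `C/2C`, of order `2`.
-/

@[to_additive]
theorem apply_eq_self_or_inv_of_leftInverse {G : Type*} [Group G] [IsCyclic G]
    [IsMulTorsionFree G] {σ τ : G →* G} (h : Function.LeftInverse τ σ) :
    (∀ x, σ x = x) ∨ ∀ x, σ x = x⁻¹ := by
  obtain ⟨m, hm⟩ := σ.map_cyclic
  obtain ⟨n, hn⟩ := τ.map_cyclic
  obtain hG | ⟨x, hx⟩ := forall_or_exists_not fun x : G => x = 1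
  · exact .inl fun x => (hG _).trans (hG x).symm
  have hmn : m * n = 1 := by
    refine injective_zpow_iff_not_isOfFinOrder.2 (not_isOfFinOrder_of_isMulTorsionFree hx) ?_
    simp only [zpow_mul, zpow_one, ← hm, ← hn, h x]
  obtain rfl | rfl := Int.isUnit_iff.1 (IsUnit.of_mul_eq_one n hmn)
  · exact .inl fun x => by rw [hm, zpow_one]
  · exact .inr fun x => by rw [hm, zpow_neg_one]

theorem isAddTorsionFree_of_isAddCyclic_of_infinite {A : Type*} [AddGroup A] [IsAddCyclic A]
    [Infinite A] : IsAddTorsionFree A :=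
  Function.Injective.isAddTorsionFree (intCyclicAddEquiv (G := A)).symm.toAddMonoidHom
    intCyclicAddEquiv.symm.injective

theorem reflTransGen_iff_exists_seq {α : Type*} {r : α → α → Prop} {a b : α} :
    Relation.ReflTransGen r a b ↔
      ∃ (n : ℕ) (f : ℕ → α), f 0 = a ∧ f n = b ∧ ∀ i < n, r (f i) (f (i + 1)) := by
  constructor
  · intro h
    induction h using Relation.ReflTransGen.head_induction_on with
    | refl => exact ⟨0, fun _ => b, rfl, rfl, by simp⟩
    | @head a _ hac _ ih =>
      obtain ⟨n, f, rfl, rfl, hf⟩ := ih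
      refine ⟨n + 1, fun i => i.casesOn a f, rfl, rfl, fun i hi => ?_⟩
      cases i with
      | zero => exact hac
      | succ i => exact hf i (by omega)
  · rintro ⟨n, f, rfl, rfl, hf⟩
    induction n with
    | zero => exact .refl
    | succ n ih => exact (ih fun i hi => hf i (by omega)).tail (hf n n.lt_succ_self)

section Lambda

variable {B : Type*} [SkewBrace B]

theorem mul_eq_add_lam (a b : B) : a * b = a + lam a b := by
  simp [lam]

theorem lam_one (b : B) : lam 1 b = b := by
  simp [lam, one_eq_zero]

theorem lam_inv_lam (a b : B) : lam a⁻¹ (lam a b) = b := by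
  rw [← lam_mul, inv_mul_cancel, lam_one]

theorem lam_lam_inv (a b : B) : lam a (lam a⁻¹ b) = b := by
  rw [← lam_mul, mul_inv_cancel, lam_one]

theorem inv_mul_eq_lam (a b : B) : a⁻¹ * b = lam a⁻¹ (-a + b) := by
  have h := lam_add a⁻¹ a (-a + b)
  rw [add_neg_cancel_left] at h
  rw [mul_eq_add_lam, h, ← add_assoc, ← mul_eq_add_lam, inv_mul_cancel, one_eq_zero, zero_add]

/-- The map `λ_a`, bundled as an endomorphism of `(B,+)`. -/
def lamHom (a : B) : B →+ B := AddMonoidHom.mk' (lam a) (lam_add a)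

theorem lam_neg (a b : B) : lam a (-b) = -lam a b :=
  map_neg (lamHom a) b

theorem neg_add_lam_eq (a b : B) : -b + lam a b = -b + -a + b + lam b (b⁻¹ * a * b) := by
  simp [lam, add_assoc, mul_assoc]

end Lambda

section Socle

variable {B : Type*} [SkewBrace B]

theorem inv_eq_neg_of_lam_self {a : B} (h : lam a a = a) : a⁻¹ = -a := by
  rw [inv_eq_iff_mul_eq_one, mul_eq_add_lam, lam_neg, h, add_neg_cancel, one_eq_zero]

variable (B) in
/-- The socle `Soc(B) = Ker(λ) ∩ Z(B,+)`, as a subgroup of `(B,+)`. -/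
def socle : AddSubgroup B where
  carrier := {a | (∀ b, lam a b = b) ∧ a ∈ AddSubgroup.center B}
  zero_mem' := ⟨fun b => one_eq_zero (B := B) ▸ lam_one b, zero_mem _⟩
  add_mem' := by
    rintro a b ⟨ha, ha'⟩ ⟨hb, hb'⟩
    refine ⟨fun c => ?_, add_mem ha' hb'⟩
    rw [← ha b, ← mul_eq_add_lam, lam_mul, hb, ha]
  neg_mem' := by
    rintro a ⟨ha, ha'⟩
    refine ⟨fun b => ?_, neg_mem ha'⟩
    rw [← inv_eq_neg_of_lam_self (ha a), ← ha (lam a⁻¹ b), lam_lam_inv]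

theorem mul_eq_add_of_mem_socle {a : B} (ha : a ∈ socle B) (b : B) : a * b = a + b := by
  rw [mul_eq_add_lam, ha.1]

theorem mul_mul_inv_eq_lam_of_lam_mem_socle {a b : B}
    (hba : lam b a ∈ socle B) : b * a * b⁻¹ = lam b a := by
  rw [mul_inv_eq_iff_eq_mul, mul_eq_add_of_mem_socle hba, mul_eq_add_lam]
  exact AddSubgroup.mem_center_iff.1 hba.2 b

end Socle

namespace BraceIdeal

variable {B : Type*} [SkewBrace B]

/-- A `λ`-invariant additive subgroup of the socle, as an ideal: on the socle the multiplication
agrees with the addition, and multiplicative conjugation by `b` agrees with `λ_b`. -/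
def ofLeSocle (H : AddSubgroup B) (hH : H ≤ socle B) (hlam : ∀ b, ∀ a ∈ H, lam b a ∈ H) :
    BraceIdeal B where
  carrier := H
  zero_mem := H.zero_mem
  add_mem := H.add_mem
  neg_mem := H.neg_mem
  mul_mem ha hb := mul_eq_add_of_mem_socle (hH ha) _ ▸ H.add_mem ha hb
  inv_mem ha := inv_eq_neg_of_lam_self ((hH ha).1 _) ▸ H.neg_mem ha
  addConj_mem b a ha := by
    rwa [AddSubgroup.mem_center_iff.1 (hH ha).2 b, add_neg_cancel_right]
  mulConj_mem b a ha :=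
    mul_mul_inv_eq_lam_of_lam_mem_socle (hH (hlam b a ha)) ▸ hlam b a ha
  lam_mem b a ha := hlam b a ha

instance addSubgroup_normal (I : BraceIdeal B) : I.addSubgroup.Normal :=
  ⟨fun _ ha b => I.addConj_mem b ha⟩

instance subgroup_normal (I : BraceIdeal B) : I.subgroup.Normal :=
  ⟨fun _ ha b => I.mulConj_mem b ha⟩

section LamKer

/-- The kernel of the map `λ` of the brace `I`, as a subgroup of `(B,·)`. -/
def lamKer (I : BraceIdeal B) : Subgroup B where
  carrier := {x | x ∈ I.carrier ∧ ∀ y ∈ I.carrier, lam x y = y}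
  one_mem' := ⟨I.subgroup.one_mem, fun y _ => lam_one y⟩
  mul_mem' := by
    rintro x x' ⟨hx, hlx⟩ ⟨hx', hlx'⟩
    exact ⟨I.mul_mem hx hx', fun y hy => by rw [lam_mul, hlx' y hy, hlx y hy]⟩
  inv_mem' := by
    rintro x ⟨hx, hlx⟩
    exact ⟨I.inv_mem hx, fun y hy => by rw [← hlx _ (I.lam_mem x⁻¹ hy), lam_lam_inv]⟩

variable {I : BraceIdeal B}

instance lamKer_normal : I.lamKer.Normal where
  conj_mem := by
    rintro x ⟨hx, hlx⟩ b
    refine ⟨I.mulConj_mem b hx, fun y hy => ?_⟩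
    rw [lam_mul, lam_mul, hlx _ (I.lam_mem _ hy), lam_lam_inv]

theorem mul_eq_add_of_mem_lamKer {x y : B} (hx : x ∈ I.lamKer) (hy : y ∈ I.lamKer) :
    x * y = x + y := by
  rw [mul_eq_add_lam, hx.2 y hy.1]

theorem inv_eq_neg_of_mem_lamKer {x : B} (hx : x ∈ I.lamKer) : x⁻¹ = -x :=
  inv_eq_neg_of_lam_self (hx.2 x hx.1)

variable (I) in
/-- The inclusion of `Ker(λ)`, with the group structure of `(B,·)`, into `(I,+)`. -/
def lamKerInclusion : I.lamKer →* Multiplicative I.addSubgroup where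
  toFun x := .ofAdd ⟨x, x.2.1⟩
  map_one' := congrArg Multiplicative.ofAdd (Subtype.ext one_eq_zero)
  map_mul' x y :=
    congrArg Multiplicative.ofAdd (Subtype.ext (mul_eq_add_of_mem_lamKer x.2 y.2))

theorem lamKerInclusion_injective : Function.Injective I.lamKerInclusion := fun _ _ h =>
  Subtype.ext (congrArg (fun z => (z.toAdd : B)) h)

variable [IsAddCyclic I.addSubgroup]

instance isCyclic_lamKer : IsCyclic I.lamKer :=
  isCyclic_of_injective I.lamKerInclusion lamKerInclusion_injective

variable [IsAddTorsionFree I.addSubgroup]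

instance isMulTorsionFree_lamKer : IsMulTorsionFree I.lamKer :=
  Function.Injective.isMulTorsionFree I.lamKerInclusion lamKerInclusion_injective

theorem lam_eq_self_or_neg (b : B) :
    (∀ x ∈ I.carrier, lam b x = x) ∨ ∀ x ∈ I.carrier, lam b x = -x := by
  let restrict (a : B) : I.addSubgroup →+ I.addSubgroup :=
    ((lamHom a).comp I.addSubgroup.subtype).codRestrict I.addSubgroup fun x => I.lam_mem a x.2
  have h : Function.LeftInverse (restrict b⁻¹) (restrict b) := fun x =>
    Subtype.ext (lam_inv_lam b x)
  exact (apply_eq_self_or_neg_of_leftInverse h).imp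
    (fun h x hx => congrArg Subtype.val (h ⟨x, hx⟩))
    (fun h x hx => congrArg Subtype.val (h ⟨x, hx⟩))

theorem conj_eq_self_or_neg {x : B} (hx : x ∈ I.lamKer) (b : B) :
    b * x * b⁻¹ = x ∨ b * x * b⁻¹ = -x := by
  let conj (a : B) : I.lamKer →* I.lamKer := (MulAut.conjNormal a).toMonoidHom
  have h : Function.LeftInverse (conj b⁻¹) (conj b) := fun y => by
    simp [conj]
  rw [← inv_eq_neg_of_mem_lamKer hx]
  exact (apply_eq_self_or_inv_of_leftInverse h).imp
    (fun h => congrArg Subtype.val (h ⟨x, hx⟩))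
    (fun h => congrArg Subtype.val (h ⟨x, hx⟩))

theorem add_self_mem_lamKer {x : B} (hx : x ∈ I.carrier) : x + x ∈ I.lamKer := by
  by_cases hker : x ∈ I.lamKer
  · rw [← mul_eq_add_of_mem_lamKer hker hker]
    exact mul_mem hker hker
  have hneg_notMem : -x ∉ I.lamKer := fun h => by
    refine hker ?_
    rw [← neg_neg x, ← inv_eq_neg_of_mem_lamKer h]
    exact inv_mem h
  have lam_eq_neg {y : B} (hy : y ∈ I.carrier) (hyker : y ∉ I.lamKer) :
      ∀ z ∈ I.carrier, lam y z = -z :=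
    (lam_eq_self_or_neg y).resolve_left fun h => hyker ⟨hy, h⟩
  have hadd : x + x = x * -x := by
    rw [mul_eq_add_lam, lam_eq_neg hx hker _ (I.neg_mem hx), neg_neg]
  refine ⟨I.add_mem hx hx, fun y hy => ?_⟩
  rw [hadd, lam_mul, lam_eq_neg (I.neg_mem hx) hneg_notMem y hy,
    lam_eq_neg hx hker _ (I.neg_mem hy), neg_neg]

theorem lam_eq_self_or_add_of_mem_lamKer (hI : I.addSubgroup ≤ AddSubgroup.center B) {x : B}
    (hx : x ∈ I.lamKer) (b : B) : lam x b = b ∨ lam x b = b + -(x + x) := by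
  have hdisp : lam x b = b + (-x + lam b (b⁻¹ * x * b)) := by
    rw [← neg_add_eq_iff_eq_add, neg_add_lam_eq, add_assoc (-b),
      ← AddSubgroup.mem_center_iff.1 (hI (I.neg_mem hx.1)) b, neg_add_cancel_left]
  have hsign : lam b (b⁻¹ * x * b) = x ∨ lam b (b⁻¹ * x * b) = -x := by
    have hconj := conj_eq_self_or_neg hx b⁻¹
    rw [inv_inv] at hconj
    obtain hc | hc := hconj <;> obtain hl | hl := lam_eq_self_or_neg (I := I) b <;>
      simp [hc, hl, hx.1, I.neg_mem]
  rw [hdisp]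
  obtain h | h := hsign <;> simp [h]

-- If `λ_x(b) = b - 2x`, then `λ_x(2b) = 2b - 4x`, which must be `2b` or `2b - 2x`; so `2x = 0`.
theorem mem_socle_of_mem_lamKer (hI : I.addSubgroup ≤ AddSubgroup.center B) {x : B}
    (hx : x ∈ I.lamKer) : x ∈ socle B := by
  refine ⟨fun b => ?_, hI hx.1⟩
  obtain h | h := lam_eq_self_or_add_of_mem_lamKer hI hx b
  · exact h
  obtain ⟨c, hc⟩ : ∃ c : I.addSubgroup, (c : B) = -(x + x) :=
    ⟨⟨_, I.neg_mem (I.add_mem hx.1 hx.1)⟩, rfl⟩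
  rw [← hc] at h
  have hbc : AddCommute (c : B) b := (AddSubgroup.mem_center_iff.1 (hI c.2) b).symm
  have hdouble : lam x (b + b) = b + b + (c + c) := by
    rw [lam_add, h, hbc.add_add_add_comm]
  have hc_zero : c = 0 := by
    obtain h' | h' := lam_eq_self_or_add_of_mem_lamKer hI hx (b + b)
    · rw [hdouble, add_eq_left] at h'
      refine (nsmul_eq_zero_iff_right two_ne_zero).1 (Subtype.ext ?_)
      rwa [two_nsmul]
    · rw [hdouble, ← hc, add_right_inj, add_eq_left] at h'
      exact Subtype.ext h'
  rw [h, hc_zero, ZeroMemClass.coe_zero, add_zero]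

theorem exists_ideal_eq_zmultiples_add_self (hI : I.addSubgroup ≤ AddSubgroup.center B) {g : B}
    (hg : g ∈ I.carrier) : ∃ D : BraceIdeal B,
      D.addSubgroup = AddSubgroup.zmultiples (g + g) ∧ D.addSubgroup ≤ socle B := by
  have hsocle : AddSubgroup.zmultiples (g + g) ≤ socle B :=
    AddSubgroup.zmultiples_le_of_mem (mem_socle_of_mem_lamKer hI (add_self_mem_lamKer hg))
  refine ⟨ofLeSocle (AddSubgroup.zmultiples (g + g)) hsocle fun b a ha => ?_, rfl, hsocle⟩
  obtain h | h := lam_eq_self_or_neg (I := I) b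
  all_goals
    rw [h a (AddSubgroup.zmultiples_le_of_mem (H := I.addSubgroup) (I.add_mem hg hg) ha)]
  exacts [ha, neg_mem ha]

end LamKer

end BraceIdeal

section BraceHom

/-- Homomorphisms of braces: maps which are homomorphisms of both group structures. -/
structure BraceHom (A B : Type*) [SkewBrace A] [SkewBrace B] extends A →+ B, A →* B

variable {A B : Type*} [SkewBrace A] [SkewBrace B]

namespace BraceHom

instance : FunLike (BraceHom A B) A B where
  coe f := f.toFun
  coe_injective := by
    rintro ⟨f, _, _⟩ ⟨g, _, _⟩ h
    congr
    exact DFunLike.coe_injective h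

instance : AddMonoidHomClass (BraceHom A B) A B where
  map_add f := f.map_add'
  map_zero f := f.map_zero'

instance : MonoidHomClass (BraceHom A B) A B where
  map_mul f := f.map_mul'
  map_one f := f.map_one'

theorem map_lam (f : BraceHom A B) (a b : A) : f (lam a b) = lam (f a) (f b) := by
  simp only [lam, map_add, map_neg, map_mul]

end BraceHom

namespace BraceIdeal

/-- The preimage of an ideal under a homomorphism of braces. -/
def comap (f : BraceHom A B) (I : BraceIdeal B) : BraceIdeal A where
  carrier := f ⁻¹' I.carrier
  zero_mem := by simpa only [Set.mem_preimage, map_zero] using I.zero_mem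
  add_mem ha hb := by simpa only [Set.mem_preimage, map_add] using I.add_mem ha hb
  neg_mem ha := by simpa only [Set.mem_preimage, map_neg] using I.neg_mem ha
  mul_mem ha hb := by simpa only [Set.mem_preimage, map_mul] using I.mul_mem ha hb
  inv_mem ha := by simpa only [Set.mem_preimage, map_inv] using I.inv_mem ha
  addConj_mem b _ ha := by
    simpa only [Set.mem_preimage, map_add, map_neg] using I.addConj_mem (f b) ha
  mulConj_mem b _ ha := by
    simpa only [Set.mem_preimage, map_mul, map_inv] using I.mulConj_mem (f b) ha
  lam_mem b _ ha := by
    simpa only [Set.mem_preimage, BraceHom.map_lam] using I.lam_mem (f b) ha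

/-- The image of an ideal under a surjective homomorphism of braces. -/
def map (f : BraceHom A B) (hf : Function.Surjective f) (I : BraceIdeal A) : BraceIdeal B where
  carrier := f '' I.carrier
  zero_mem := ⟨0, I.zero_mem, map_zero f⟩
  add_mem := by
    rintro _ _ ⟨a, ha, rfl⟩ ⟨b, hb, rfl⟩
    exact ⟨a + b, I.add_mem ha hb, map_add f a b⟩
  neg_mem := by
    rintro _ ⟨a, ha, rfl⟩
    exact ⟨-a, I.neg_mem ha, map_neg f a⟩
  mul_mem := by
    rintro _ _ ⟨a, ha, rfl⟩ ⟨b, hb, rfl⟩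
    exact ⟨a * b, I.mul_mem ha hb, map_mul f a b⟩
  inv_mem := by
    rintro _ ⟨a, ha, rfl⟩
    exact ⟨a⁻¹, I.inv_mem ha, map_inv f a⟩
  addConj_mem := by
    rintro b' _ ⟨a, ha, rfl⟩
    obtain ⟨b, rfl⟩ := hf b'
    exact ⟨b + a + -b, I.addConj_mem b ha, by simp only [map_add, map_neg]⟩
  mulConj_mem := by
    rintro b' _ ⟨a, ha, rfl⟩
    obtain ⟨b, rfl⟩ := hf b'
    exact ⟨b * a * b⁻¹, I.mulConj_mem b ha, by simp only [map_mul, map_inv]⟩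
  lam_mem := by
    rintro b' _ ⟨a, ha, rfl⟩
    obtain ⟨b, rfl⟩ := hf b'
    exact ⟨lam b a, I.lam_mem b ha, f.map_lam b a⟩

end BraceIdeal

end BraceHom

namespace BraceIdeal

variable {B : Type*} [SkewBrace B]

theorem inv_mul_mem_iff (J : BraceIdeal B) {a b : B} :
    a⁻¹ * b ∈ J.carrier ↔ -a + b ∈ J.carrier := by
  rw [inv_mul_eq_lam]
  refine ⟨fun h => ?_, J.lam_mem a⁻¹⟩
  simpa only [lam_lam_inv] using J.lam_mem a h

/-- The quotient brace `B/J`. Its underlying type is the quotient of `(B,+)`; additive and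
multiplicative cosets of an ideal agree by `inv_mul_mem_iff`. -/
instance : HasQuotient B (BraceIdeal B) :=
  ⟨fun J => B ⧸ J.addSubgroup⟩

theorem leftRel_eq (J : BraceIdeal B) :
    QuotientAddGroup.leftRel J.addSubgroup = QuotientGroup.leftRel J.subgroup :=
  Setoid.ext fun a b => by
    rw [QuotientAddGroup.leftRel_apply, QuotientGroup.leftRel_apply]
    exact J.inv_mul_mem_iff.symm

/-- Congruence modulo `J`, as a congruence of `(B,·)`. -/
def mulCon (J : BraceIdeal B) : Con B where
  toSetoid := QuotientAddGroup.leftRel J.addSubgroup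
  mul' := by
    rw [leftRel_eq]
    exact (QuotientGroup.con J.subgroup).mul'

instance (J : BraceIdeal B) : AddGroup (B ⧸ J) :=
  inferInstanceAs (AddGroup (B ⧸ J.addSubgroup))

instance (J : BraceIdeal B) : Group (B ⧸ J) :=
  inferInstanceAs (Group J.mulCon.Quotient)

instance (J : BraceIdeal B) : SkewBrace (B ⧸ J) where
  one_eq_zero := congrArg (Quotient.mk _) (one_eq_zero (B := B))
  skew_distrib := by
    rintro ⟨a⟩ ⟨b⟩ ⟨c⟩
    exact congrArg (Quotient.mk _) (skew_distrib a b c)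

/-- The quotient map `B → B/J`. -/
def mkQ (J : BraceIdeal B) : BraceHom B (B ⧸ J) where
  toFun := Quotient.mk _
  map_zero' := rfl
  map_add' _ _ := rfl
  map_one' := rfl
  map_mul' _ _ := rfl

theorem mkQ_surjective (J : BraceIdeal B) : Function.Surjective J.mkQ :=
  Quotient.mk_surjective

theorem mkQ_eq_mkQ_iff (J : BraceIdeal B) {a b : B} : J.mkQ a = J.mkQ b ↔ -a + b ∈ J.carrier :=
  QuotientAddGroup.eq

theorem mkQ_eq_zero_iff (J : BraceIdeal B) {a : B} : J.mkQ a = 0 ↔ a ∈ J.carrier :=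
  QuotientAddGroup.eq_zero_iff a

theorem mkQ_mem_center_iff (J : BraceIdeal B) {x : B} :
    J.mkQ x ∈ AddSubgroup.center (B ⧸ J) ↔ ∀ b, -(b + x) + (x + b) ∈ J.carrier := by
  simp only [AddSubgroup.mem_center_iff, J.mkQ_surjective.forall, ← map_add, mkQ_eq_mkQ_iff]

theorem memSocQuot_iff_mkQ_mem_socle (J : BraceIdeal B) {x : B} :
    MemSocQuot J.carrier x ↔ J.mkQ x ∈ socle (B ⧸ J) := by
  have hlam : (∀ b, lam (J.mkQ x) b = b) ↔ ∀ b, -b + lam x b ∈ J.carrier := by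
    rw [J.mkQ_surjective.forall]
    exact forall_congr' fun b => by rw [← BraceHom.map_lam, eq_comm, mkQ_eq_mkQ_iff]
  change _ ↔ (∀ b, lam (J.mkQ x) b = b) ∧ _
  rw [hlam, mkQ_mem_center_iff]
  simp only [MemSocQuot, MemSocQuotRel, Set.mem_univ, true_and, forall_const]

theorem mkQ_mem_zmultiples_iff (J : BraceIdeal B) {a x : B} :
    J.mkQ x ∈ AddSubgroup.zmultiples (J.mkQ a) ↔ ∃ n : ℤ, -(n • a) + x ∈ J.carrier := by
  simp only [AddSubgroup.mem_zmultiples_iff, ← map_zsmul, mkQ_eq_mkQ_iff]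

theorem not_isOfFinAddOrder_mkQ_iff (J : BraceIdeal B) {a : B} :
    ¬IsOfFinAddOrder (J.mkQ a) ↔ ∀ n : ℤ, n • a ∈ J.carrier → n = 0 := by
  simp only [isOfFinAddOrder_iff_zsmul_eq_zero, ← map_zsmul, mkQ_eq_zero_iff]
  grind

theorem addSubgroup_map_mkQ_eq_zmultiples {J I : BraceIdeal B} {g : B} (hg : g ∈ I.carrier)
    (hgen : ∀ y ∈ I.carrier, ∃ n : ℤ, -(n • g) + y ∈ J.carrier) :
    (I.map J.mkQ J.mkQ_surjective).addSubgroup = AddSubgroup.zmultiples (J.mkQ g) := by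
  refine le_antisymm ?_ (AddSubgroup.zmultiples_le_of_mem ⟨g, hg, rfl⟩)
  rintro _ ⟨y, hy, rfl⟩
  exact J.mkQ_mem_zmultiples_iff.2 (hgen y hy)

end BraceIdeal

section Chains

variable {B : Type*} [SkewBrace B]

/-- The condition imposed by `IsSupersoluble` on a factor `I/J`. -/
def IsSupersolubleFactor (J I : BraceIdeal B) : Prop :=
  (QuotAddInfCyclic J.carrier I.carrier ∧ ∀ x ∈ I.carrier, MemSocQuot J.carrier x) ∨
    ∃ p : ℕ, QuotPrimeOrder J.carrier I.carrier p

/-- The condition imposed by `IsWeaklySupersoluble` on a factor `I/J`. -/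
def IsWeaklySupersolubleFactor (J I : BraceIdeal B) : Prop :=
  (QuotAddInfCyclic J.carrier I.carrier ∧
      ∀ x ∈ I.carrier, ∀ b : B, -(b + x) + (x + b) ∈ J.carrier) ∨
    ∃ p : ℕ, QuotPrimeOrder J.carrier I.carrier p

/-- The relation between consecutive terms `J`, `I` of the chains in `IsSupersoluble`. -/
def IsSupersolubleStep (J I : BraceIdeal B) : Prop :=
  J.carrier ⊆ I.carrier ∧ IsSupersolubleFactor J I

/-- The relation between consecutive terms `J`, `I` of the chains in `IsWeaklySupersoluble`. -/
def IsWeaklySupersolubleStep (J I : BraceIdeal B) : Prop :=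
  J.carrier ⊆ I.carrier ∧ IsWeaklySupersolubleFactor J I

theorem exists_ideal_seq_iff_reflTransGen {r : BraceIdeal B → BraceIdeal B → Prop} :
    (∃ (n : ℕ) (I : ℕ → BraceIdeal B), (I 0).carrier = {0} ∧ (I n).carrier = Set.univ ∧
        (∀ i, i < n → (I i).carrier ⊆ (I (i + 1)).carrier) ∧
        ∀ i, i < n → r (I i) (I (i + 1))) ↔
      ∃ J I : BraceIdeal B, J.carrier = {0} ∧ I.carrier = Set.univ ∧
        Relation.ReflTransGen (fun J I => J.carrier ⊆ I.carrier ∧ r J I) J I := by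
  simp only [reflTransGen_iff_exists_seq]
  constructor
  · rintro ⟨n, I, h0, hn, hle, hr⟩
    exact ⟨_, _, h0, hn, n, I, rfl, rfl, fun i hi => ⟨hle i hi, hr i hi⟩⟩
  · rintro ⟨_, _, h0, hn, n, I, rfl, rfl, h⟩
    exact ⟨n, I, h0, hn, fun i hi => (h i hi).1, fun i hi => (h i hi).2⟩

variable (B) in
theorem isSupersoluble_iff_reflTransGen :
    IsSupersoluble B ↔ ∃ J I : BraceIdeal B, J.carrier = {0} ∧ I.carrier = Set.univ ∧
      Relation.ReflTransGen IsSupersolubleStep J I :=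
  exists_ideal_seq_iff_reflTransGen (r := IsSupersolubleFactor)

variable (B) in
theorem isWeaklySupersoluble_iff_reflTransGen :
    IsWeaklySupersoluble B ↔ ∃ J I : BraceIdeal B, J.carrier = {0} ∧ I.carrier = Set.univ ∧
      Relation.ReflTransGen IsWeaklySupersolubleStep J I :=
  exists_ideal_seq_iff_reflTransGen (r := IsWeaklySupersolubleFactor)

variable {J I : BraceIdeal B}

theorem IsSupersolubleStep.isWeaklySupersolubleStep (h : IsSupersolubleStep J I) :
    IsWeaklySupersolubleStep J I :=
  h.imp_right (Or.imp_left (And.imp_right fun hsoc x hx b => (hsoc x hx).2.2 b (Set.mem_univ b)))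

theorem exists_ideal_le_socle_of_central_quotAddInfCyclic {g : B} (hg : g ∈ I.carrier)
    (hgen : ∀ y ∈ I.carrier, ∃ n : ℤ, -(n • g) + y ∈ J.carrier)
    (hinf : ∀ n : ℤ, n • g ∈ J.carrier → n = 0)
    (hcen : ∀ x ∈ I.carrier, ∀ b : B, -(b + x) + (x + b) ∈ J.carrier) :
    ∃ K : BraceIdeal B,
      (∀ x, x ∈ K.carrier ↔ ∃ n : ℤ, -(n • (g + g)) + x ∈ J.carrier) ∧
      ∀ x ∈ K.carrier, MemSocQuot J.carrier x := by
  let C := I.map J.mkQ J.mkQ_surjective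
  have hC : C.addSubgroup = AddSubgroup.zmultiples (J.mkQ g) :=
    BraceIdeal.addSubgroup_map_mkQ_eq_zmultiples hg hgen
  have hC_center : C.addSubgroup ≤ AddSubgroup.center (B ⧸ J) := by
    rintro _ ⟨x, hx, rfl⟩
    exact J.mkQ_mem_center_iff.2 (hcen x hx)
  have : IsAddCyclic C.addSubgroup := hC ▸ inferInstance
  have : Infinite C.addSubgroup :=
    hC ▸ (infinite_zmultiples.2 (J.not_isOfFinAddOrder_mkQ_iff.2 hinf)).to_subtype
  have : IsAddTorsionFree C.addSubgroup := isAddTorsionFree_of_isAddCyclic_of_infinite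
  obtain ⟨D, hD, hD_socle⟩ :=
    BraceIdeal.exists_ideal_eq_zmultiples_add_self hC_center ⟨g, hg, rfl⟩
  refine ⟨D.comap J.mkQ, fun x => ?_, fun x hx => J.memSocQuot_iff_mkQ_mem_socle.2 (hD_socle hx)⟩
  rw [← J.mkQ_mem_zmultiples_iff, map_add, ← hD]
  rfl

theorem IsWeaklySupersolubleStep.reflTransGen (h : IsWeaklySupersolubleStep J I) :
    Relation.ReflTransGen IsSupersolubleStep J I := by
  obtain ⟨hJI, ⟨⟨g, hg, hgen, hinf⟩, hcen⟩ | hprime⟩ := h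
  swap
  · exact .single ⟨hJI, .inr hprime⟩
  obtain ⟨K, hK, hK_soc⟩ := exists_ideal_le_socle_of_central_quotAddInfCyclic hg hgen hinf hcen
  have hgg_mem : g + g ∈ K.carrier := (hK _).2 ⟨1, by simpa using J.zero_mem⟩
  have hJK : J.carrier ⊆ K.carrier := fun x hx => (hK x).2 ⟨0, by simpa using hx⟩
  have hKI : K.carrier ⊆ I.carrier := fun x hx => by
    obtain ⟨n, hn⟩ := (hK x).1 hx
    have hmem := I.add_mem (I.addSubgroup.zsmul_mem (I.add_mem hg hg) n) (hJI hn)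
    rwa [add_neg_cancel_left] at hmem
  have hg_notMem : g ∉ K.carrier := fun hgK => by
    obtain ⟨n, hn⟩ := (hK g).1 hgK
    have := hinf (-(n * 2) + 1) (by
      rwa [add_zsmul, neg_zsmul, mul_zsmul, two_zsmul, one_zsmul])
    omega
  have hcyclic : QuotAddInfCyclic J.carrier K.carrier := by
    refine ⟨g + g, hgg_mem, fun x hx => (hK x).1 hx, fun n hn => ?_⟩
    have := hinf (n * 2) (by rwa [mul_zsmul, two_zsmul])
    omega
  have hindex : QuotPrimeOrder K.carrier I.carrier 2 :=
    ⟨Nat.prime_two, g, hg, hg_notMem, by rwa [two_nsmul], fun y hy =>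
      (hgen y hy).imp fun _ hn => hJK hn⟩
  exact .head ⟨hJK, .inl ⟨hcyclic, hK_soc⟩⟩ (.single ⟨hKI, .inr ⟨2, hindex⟩⟩)

end Chains

/-- A brace is weakly supersoluble if and only if it is supersoluble. -/
theorem weaklySupersoluble_iff_supersoluble (B : Type*) [SkewBrace B] :
    IsWeaklySupersoluble B ↔ IsSupersoluble B := by
  rw [isWeaklySupersoluble_iff_reflTransGen, isSupersoluble_iff_reflTransGen]
  constructor
  · rintro ⟨J, I, hJ, hI, hchain⟩
    exact ⟨J, I, hJ, hI,
      Relation.reflTransGen_closed (fun _ _ => IsWeaklySupersolubleStep.reflTransGen) _ _ hchain⟩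
  · rintro ⟨J, I, hJ, hI, hchain⟩
    exact ⟨J, I, hJ, hI, Relation.ReflTransGen.mono
      (fun _ _ => IsSupersolubleStep.isWeaklySupersolubleStep) _ _ hchain⟩

end SkewBrace
end
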